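/- For Schwartz functions φ with ∫_ℝ φ = 0, the quadratic form ∬_{ℝ²} φ(t)φ(s) log(1/|t-s|) ds dt equals (1/2) ∫_ℝ |φ̂(ξ)|²/|ξ| dξ. In particular this quadratic form is nonnegative on mean-zero Schwartz functions. -/

import Mathlib

open MeasureTheory Real

/-- Fourier transform with convention `f̂(ξ) = ∫ e^{-2πiξx} f(x) dx`. -/
noncomputable def fourierHat (f : ℝ → ℝ) (ξ : ℝ) : ℂ :=
  ∫ x : ℝ, Complex.exp (-2 * Real.pi * Complex.I * ξ * x) * (f x : ℂ)

/-!
Frullani's integral gives `log ‖x‖² = ∫₀^∞ (e^{-u} - e^{-‖x‖²u}) du/u`. Integrated against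
`f(t) * conj f(s)` with `∫ f = 0`, the term `e^{-u}` disappears, so the logarithmic energy of `f` is
half the `du/u`-average of the quadratic forms with kernels `e^{-u‖t-s‖²}`. Such a kernel is the
Fourier transform of a positive Gaussian, hence its form is the integral of `‖𝓕 f‖²` against that
Gaussian. The `du/u`-average of these Gaussians is homogeneous of degree `-d` in dimension `d`; it
is `Γ(d/2) π^{-d/2} ‖ξ‖^{-d}`, that is `‖ξ‖⁻¹` for `d = 1`.
-/

open Set Filter Topology Module
open scoped FourierTransform ComplexConjugate RealInnerProductSpace SchwartzMap

section Frullani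

variable {a b : ℝ}

lemma abs_exp_neg_sub_exp_neg_le (p q : ℝ) :
    |exp (-p) - exp (-q)| ≤ |p - q| * exp (-min p q) := by
  wlog h : p ≤ q generalizing p q
  · rw [abs_sub_comm, abs_sub_comm p, min_comm]
    exact this q p (le_of_not_ge h)
  rw [min_eq_left h, abs_of_nonneg (by simpa using h), abs_of_nonpos (sub_nonpos.2 h)]
  calc exp (-p) - exp (-q) = (1 - exp (p - q)) * exp (-p) := by
        rw [sub_mul, one_mul, ← exp_add]; ring_nf
    _ ≤ -(p - q) * exp (-p) := by
        gcongr
        linarith [add_one_le_exp (p - q)]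

lemma integrableOn_exp_neg_mul_sub_exp_neg_mul_div (ha : 0 < a) (hb : 0 < b) :
    IntegrableOn (fun u : ℝ => (exp (-(a * u)) - exp (-(b * u))) / u) (Ioi 0) := by
  have hbound : IntegrableOn (fun u => |a - b| * exp (-min a b * u)) (Ioi 0) :=
    (exp_neg_integrableOn_Ioi 0 (lt_min ha hb)).const_mul _
  refine hbound.mono' (Measurable.aestronglyMeasurable (by fun_prop))
    (ae_restrict_of_forall_mem measurableSet_Ioi fun u hu => ?_)
  have hu : 0 < u := hu
  rw [norm_eq_abs, abs_div, abs_of_pos hu, div_le_iff₀ hu]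
  calc |exp (-(a * u)) - exp (-(b * u))|
      ≤ |a * u - b * u| * exp (-min (a * u) (b * u)) := abs_exp_neg_sub_exp_neg_le _ _
    _ = |a - b| * exp (-min a b * u) * u := by
        rw [← sub_mul, abs_mul, abs_of_pos hu, ← min_mul_of_nonneg a b hu.le, neg_mul]
        ring

lemma integral_exp_neg_mul_sub_exp_neg_mul_div (ha : 0 < a) (hb : 0 < b) :
    ∫ u in Ioi (0 : ℝ), (exp (-(a * u)) - exp (-(b * u))) / u = log (b / a) := by
  have hcont : Continuous fun x : ℝ => exp (-x) := by fun_prop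
  have hzero : Tendsto (fun x : ℝ => exp (-x)) (𝓝[>] 0) (𝓝 1) := by
    simpa using (hcont.tendsto 0).mono_left nhdsWithin_le_nhds
  have hint := integrableOn_exp_neg_mul_sub_exp_neg_mul_div ha hb
  simp only [div_eq_inv_mul _ (_ : ℝ)] at hint ⊢
  simpa [div_eq_inv_mul] using Frullani.integral_Ioi_eq
    (hcont.locallyIntegrable.locallyIntegrableOn _) ha hb hzero tendsto_exp_neg_atTop_nhds_zero hint

lemma integral_abs_exp_neg_mul_sub_exp_neg_mul_div (ha : 0 < a) (hb : 0 < b) :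
    ∫ u in Ioi (0 : ℝ), |(exp (-(a * u)) - exp (-(b * u))) / u| = |log (b / a)| := by
  wlog hab : a ≤ b generalizing a b
  · have := this hb ha (le_of_not_ge hab)
    rw [← inv_div b a, log_inv, abs_neg] at this
    simp only [← this, abs_div, abs_sub_comm]
  rw [abs_of_nonneg (log_nonneg ((one_le_div ha).2 hab)),
    ← integral_exp_neg_mul_sub_exp_neg_mul_div ha hb]
  refine setIntegral_congr_fun measurableSet_Ioi fun u hu => abs_of_nonneg ?_
  have hu : 0 < u := hu
  have : exp (-(b * u)) ≤ exp (-(a * u)) := by gcongr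
  exact div_nonneg (sub_nonneg.2 this) hu.le

end Frullani

section LogAverage

variable {α E : Type*} [MeasurableSpace α] {μ : Measure α} [NormedAddCommGroup E] [NormedSpace ℝ E]
  {r : α → ℝ} {w : α → E}

lemma integrable_frullani_smul [SFinite μ] (hr : AEMeasurable r μ) (hr_pos : ∀ᵐ x ∂μ, 0 < r x)
    (hw : AEStronglyMeasurable w μ) (hlog : Integrable (fun x => log (r x) • w x) μ) :
    Integrable (fun p : α × ℝ => ((exp (-p.2) - exp (-(r p.1 * p.2))) / p.2) • w p.1)
      (μ.prod (volume.restrict (Ioi 0))) := by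
  have : AEMeasurable (fun p : α × ℝ => r p.1) (μ.prod (volume.restrict (Ioi 0))) :=
    hr.comp_fst
  have hmeas : AEStronglyMeasurable
      (fun p : α × ℝ => ((exp (-p.2) - exp (-(r p.1 * p.2))) / p.2) • w p.1)
      (μ.prod (volume.restrict (Ioi 0))) :=
    AEMeasurable.aestronglyMeasurable (by fun_prop) |>.smul hw.comp_fst
  refine (integrable_prod_iff hmeas).2 ⟨?_, hlog.norm.congr ?_⟩
  · filter_upwards [hr_pos] with x hx
    have := integrableOn_exp_neg_mul_sub_exp_neg_mul_div one_pos hx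
    simp only [one_mul] at this
    exact this.smul_const (w x)
  · filter_upwards [hr_pos] with x hx
    have := integral_abs_exp_neg_mul_sub_exp_neg_mul_div one_pos hx
    simp only [one_mul, div_one] at this
    simp only [norm_smul, norm_eq_abs, integral_mul_const, this]

lemma integrable_exp_neg_mul_smul (hr : AEMeasurable r μ) (hr_nonneg : ∀ᵐ x ∂μ, 0 ≤ r x)
    (hw : Integrable w μ) {u : ℝ} (hu : 0 ≤ u) :
    Integrable (fun x => exp (-(r x * u)) • w x) μ := by
  refine hw.bdd_smul 1 (AEMeasurable.aestronglyMeasurable (by fun_prop)) ?_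
  filter_upwards [hr_nonneg] with x hx
  rw [norm_eq_abs, abs_exp, exp_le_one_iff, neg_nonpos]
  positivity

lemma integral_frullani_smul_of_integral_eq_zero (hr : AEMeasurable r μ)
    (hr_nonneg : ∀ᵐ x ∂μ, 0 ≤ r x) (hw : Integrable w μ) (hw_zero : ∫ x, w x ∂μ = 0) {u : ℝ}
    (hu : 0 ≤ u) :
    ∫ x, ((exp (-u) - exp (-(r x * u))) / u) • w x ∂μ =
      -(u⁻¹ • ∫ x, exp (-(r x * u)) • w x ∂μ) := by
  simp only [div_eq_inv_mul, mul_smul, sub_smul]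
  have hw_exp : Integrable (fun x => exp (-u) • w x) μ := hw.smul _
  rw [integral_smul, integral_sub hw_exp (integrable_exp_neg_mul_smul hr hr_nonneg hw hu),
    integral_smul, hw_zero, smul_zero, zero_sub, smul_neg]

variable [SFinite μ] (hr : AEMeasurable r μ) (hr_pos : ∀ᵐ x ∂μ, 0 < r x) (hw : Integrable w μ)
  (hw_zero : ∫ x, w x ∂μ = 0) (hlog : Integrable (fun x => log (r x) • w x) μ)
include hr hr_pos hw hw_zero hlog

lemma integrableOn_inv_smul_integral_exp_neg_smul :
    IntegrableOn (fun u => u⁻¹ • ∫ x, exp (-(r x * u)) • w x ∂μ) (Ioi 0) := by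
  refine (integrable_frullani_smul hr hr_pos hw.1 hlog).integral_prod_right.neg.congr
    (ae_restrict_of_forall_mem measurableSet_Ioi fun u hu => neg_eq_iff_eq_neg.2 ?_)
  exact integral_frullani_smul_of_integral_eq_zero hr (hr_pos.mono fun _ => le_of_lt) hw hw_zero
    (le_of_lt hu)

theorem integral_log_smul_of_integral_eq_zero [CompleteSpace E] :
    ∫ x, log (r x) • w x ∂μ = -∫ u in Ioi (0 : ℝ), u⁻¹ • ∫ x, exp (-(r x * u)) • w x ∂μ :=
  calc ∫ x, log (r x) • w x ∂μ
      = ∫ x, (∫ u in Ioi (0 : ℝ), ((exp (-u) - exp (-(r x * u))) / u) • w x) ∂μ := by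
        refine integral_congr_ae (hr_pos.mono fun x hx => ?_)
        have := integral_exp_neg_mul_sub_exp_neg_mul_div one_pos hx
        simp only [one_mul, div_one] at this
        simp only [integral_smul_const, this]
    _ = ∫ u in Ioi (0 : ℝ), ∫ x, ((exp (-u) - exp (-(r x * u))) / u) • w x ∂μ :=
        integral_integral_swap (integrable_frullani_smul hr hr_pos hw.1 hlog)
    _ = -∫ u in Ioi (0 : ℝ), u⁻¹ • ∫ x, exp (-(r x * u)) • w x ∂μ := by
        rw [← integral_neg]
        exact setIntegral_congr_fun measurableSet_Ioi fun u hu =>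
          integral_frullani_smul_of_integral_eq_zero hr (hr_pos.mono fun _ => le_of_lt) hw hw_zero
            (le_of_lt hu)

end LogAverage

lemma integral_rpow_mul_exp_neg_div_Ioi {s c : ℝ} (hs : 0 < s) (hc : 0 < c) :
    ∫ u in Ioi (0 : ℝ), u ^ (-s - 1) * exp (-(c / u)) = Gamma s / c ^ s := by
  rw [div_eq_mul_inv, mul_comm, ← inv_rpow hc.le, ← one_div,
    ← integral_rpow_mul_exp_neg_mul_Ioi hs hc,
    ← integral_comp_rpow_Ioi (fun v => v ^ (s - 1) * exp (-(c * v)))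
      (show (-1 : ℝ) ≠ 0 by norm_num)]
  refine setIntegral_congr_fun measurableSet_Ioi fun u hu => ?_
  have hu : 0 < u := hu
  have hexp : u ^ (-1 - 1 : ℝ) * (u ^ (-1 : ℝ)) ^ (s - 1) = u ^ (-s - 1) := by
    rw [← rpow_mul hu.le, ← rpow_add hu]
    ring_nf
  simp only [smul_eq_mul]
  rw [← hexp, rpow_neg_one, div_eq_mul_inv]
  norm_num
  ring


section Gaussian

variable {V : Type*} [NormedAddCommGroup V] [InnerProductSpace ℝ V]

/-- The Fourier transform of `x ↦ exp (-u * ‖x‖ ^ 2)` on `V`, for `0 < u`. -/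
noncomputable def fourierGaussian (u : ℝ) (ξ : V) : ℝ :=
  (π / u) ^ (finrank ℝ V / 2 : ℝ) * exp (-(π ^ 2 / u) * ‖ξ‖ ^ 2)

lemma fourierGaussian_nonneg {u : ℝ} (hu : 0 ≤ u) (ξ : V) : 0 ≤ fourierGaussian u ξ := by
  unfold fourierGaussian
  positivity

variable [FiniteDimensional ℝ V] [MeasurableSpace V] [BorelSpace V] {u : ℝ}

lemma integrable_fourierGaussian (hu : 0 < u) : Integrable (fourierGaussian u : V → ℝ) := by
  have hb : 0 < ((π ^ 2 / u : ℝ) : ℂ).re := by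
    rw [Complex.ofReal_re]
    positivity
  have h := (GaussianFourier.integrable_cexp_neg_mul_sq_norm_add (V := V) hb 0 0).re
  simp only [zero_mul, add_zero] at h
  refine (h.const_mul ((π / u) ^ (finrank ℝ V / 2 : ℝ))).congr (.of_forall fun ξ => ?_)
  simp only [fourierGaussian, RCLike.re_to_complex]
  norm_cast

lemma fourier_fourierGaussian (hu : 0 < u) (x : V) :
    𝓕 (fun ξ : V => (fourierGaussian u ξ : ℂ)) x = exp (-(‖x‖ ^ 2 * u)) := by
  have hb : 0 < ((π ^ 2 / u : ℝ) : ℂ).re := by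
    rw [Complex.ofReal_re]
    positivity
  have hbase : π / (π ^ 2 / u) = u / π := by
    field_simp
  calc 𝓕 (fun ξ : V => (fourierGaussian u ξ : ℂ)) x
      = ((π / u) ^ (finrank ℝ V / 2 : ℝ) : ℝ) *
          𝓕 (fun ξ : V => Complex.exp (-(π ^ 2 / u : ℝ) * ‖ξ‖ ^ 2)) x := by
        simp only [fourier_eq, ← integral_const_mul, mul_smul_comm, fourierGaussian]
        push_cast
        rfl
    _ = ((π / u) ^ (finrank ℝ V / 2 : ℝ) *
          ((u / π) ^ (finrank ℝ V / 2 : ℝ) * exp (-π ^ 2 * ‖x‖ ^ 2 / (π ^ 2 / u))) : ℝ) := by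
        rw [fourier_gaussian_innerProductSpace hb, ← hbase]
        push_cast [Complex.ofReal_cpow (show 0 ≤ π / (π ^ 2 / u) by positivity)]
        rfl
    _ = exp (-(‖x‖ ^ 2 * u)) := by
        rw [← mul_assoc, ← mul_rpow (by positivity) (by positivity), div_mul_div_cancel₀ hu.ne',
          div_self pi_ne_zero, one_rpow, one_mul]
        congr 2
        field_simp

end Gaussian

section Fourier

variable {V : Type*} [NormedAddCommGroup V] [InnerProductSpace ℝ V] [FiniteDimensional ℝ V]
  [MeasurableSpace V] [BorelSpace V] {f g : V → ℂ}

lemma continuous_fourier_of_integrable (hf : Integrable f) : Continuous (𝓕 f) :=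
  VectorFourier.fourierIntegral_continuous continuous_fourierChar continuous_inner hf

lemma norm_fourier_le_integral_norm (f : V → ℂ) (ξ : V) : ‖𝓕 f ξ‖ ≤ ∫ x, ‖f x‖ :=
  VectorFourier.norm_fourierIntegral_le_integral_norm _ _ _ f ξ

theorem integral_mul_conj_mul_fourier_sub {G : V → ℂ} (hf : Integrable f) (hg : Integrable g)
    (hG : Integrable G) :
    ∫ p : V × V, f p.1 * conj (g p.2) * 𝓕 G (p.1 - p.2) = ∫ ξ, 𝓕 f ξ * conj (𝓕 g ξ) * G ξ := by
  let K : V × V → V → ℂ := fun p ξ => 𝐞 (-⟪ξ, p.1 - p.2⟫) • (f p.1 * conj (g p.2) * G ξ)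
  have hK_prod : ∀ p ξ, K p ξ = (𝐞 (-⟪p.1, ξ⟫) • f p.1) * conj (𝐞 (-⟪p.2, ξ⟫) • g p.2) * G ξ := by
    intro p ξ
    have hchar : 𝐞 (-⟪ξ, p.1 - p.2⟫) = 𝐞 (-⟪p.1, ξ⟫) * (𝐞 (-⟪p.2, ξ⟫))⁻¹ := by
      rw [← AddChar.map_neg_eq_inv, ← AddChar.map_add_eq_mul, inner_sub_right, real_inner_comm ξ,
        real_inner_comm ξ]
      ring_nf
    simp only [K, hchar, Circle.smul_def, smul_eq_mul, map_mul, Circle.coe_mul,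
      Circle.coe_inv_eq_conj]
    ring
  have hK : Integrable (Function.uncurry K) ((volume.prod volume).prod volume) := by
    have hg_conj : Integrable (fun x => conj (g x)) :=
      Complex.conjLIE.integrable_comp_iff.2 hg
    have hchar : Continuous fun q : (V × V) × V => (𝐞 (-⟪q.2, q.1.1 - q.1.2⟫) : ℂ) := by fun_prop
    exact ((hf.mul_prod hg_conj).mul_prod hG).bdd_smul 1 hchar.aestronglyMeasurable
      (.of_forall fun q => (Circle.norm_coe _).le)
  calc ∫ p : V × V, f p.1 * conj (g p.2) * 𝓕 G (p.1 - p.2)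
      = ∫ p : V × V, ∫ ξ, K p ξ := by
        congr with p
        simp only [fourier_eq, K, ← integral_const_mul, mul_smul_comm]
    _ = ∫ ξ, ∫ p : V × V, K p ξ := integral_integral_swap hK
    _ = ∫ ξ, 𝓕 f ξ * conj (𝓕 g ξ) * G ξ := by
        congr with ξ
        simp only [hK_prod, fourier_eq, ← integral_conj]
        rw [integral_mul_const, Measure.volume_eq_prod,
          integral_prod_mul (fun x => 𝐞 (-⟪x, ξ⟫) • f x) (fun x => conj (𝐞 (-⟪x, ξ⟫) • g x))]

theorem integral_exp_neg_smul_mul_conj (hf : Integrable f) {u : ℝ} (hu : 0 < u) :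
    ∫ p : V × V, exp (-(‖p.1 - p.2‖ ^ 2 * u)) • (f p.1 * conj (f p.2)) =
      ((∫ ξ, ‖𝓕 f ξ‖ ^ 2 * fourierGaussian u ξ : ℝ) : ℂ) := by
  have h := integral_mul_conj_mul_fourier_sub (G := fun ξ => (fourierGaussian u ξ : ℂ)) hf hf
    (integrable_fourierGaussian hu).ofReal
  simp only [fourier_fourierGaussian hu, Complex.mul_conj', ← Complex.ofReal_pow,
    ← Complex.ofReal_mul, integral_complex_ofReal] at h
  simpa only [Complex.real_smul, mul_comm] using h

end Fourier

section Dilation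

variable {V : Type*} [NormedAddCommGroup V] [InnerProductSpace ℝ V] [FiniteDimensional ℝ V]

lemma integral_inv_mul_fourierGaussian {ξ : V} (hξ : ξ ≠ 0) :
    ∫ u in Ioi (0 : ℝ), u⁻¹ * fourierGaussian u ξ =
      Gamma (finrank ℝ V / 2) / π ^ (finrank ℝ V / 2 : ℝ) / ‖ξ‖ ^ finrank ℝ V := by
  set d := finrank ℝ V with hd
  have hd_pos : (0 : ℝ) < d / 2 := by
    have : Nontrivial V := ⟨ξ, 0, hξ⟩
    have : 0 < d := finrank_pos
    positivity
  have hξ_pos : 0 < ‖ξ‖ := norm_pos_iff.2 hξ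
  have hpow : (π ^ 2 * ‖ξ‖ ^ 2) ^ (d / 2 : ℝ) = π ^ (d / 2 : ℝ) * π ^ (d / 2 : ℝ) * ‖ξ‖ ^ d := by
    rw [mul_rpow (by positivity) (by positivity), ← rpow_natCast_mul hξ_pos.le,
      ← rpow_natCast_mul pi_pos.le, ← rpow_add pi_pos, ← rpow_natCast ‖ξ‖ d]
    ring_nf
  calc ∫ u in Ioi (0 : ℝ), u⁻¹ * fourierGaussian u ξ
      = ∫ u in Ioi (0 : ℝ), π ^ (d / 2 : ℝ) *
          (u ^ (-(d / 2 : ℝ) - 1) * exp (-(π ^ 2 * ‖ξ‖ ^ 2 / u))) := by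
        refine setIntegral_congr_fun measurableSet_Ioi fun u hu => ?_
        have hu : 0 < u := hu
        simp only [fourierGaussian, ← hd]
        rw [div_rpow pi_pos.le hu.le, rpow_sub_one hu.ne', rpow_neg hu.le]
        ring_nf
    _ = Gamma (d / 2) / π ^ (d / 2 : ℝ) / ‖ξ‖ ^ d := by
        rw [integral_const_mul, integral_rpow_mul_exp_neg_div_Ioi hd_pos (by positivity), hpow]
        field_simp

variable [MeasurableSpace V] [BorelSpace V] {h : V → ℝ}

lemma integrable_mul_inv_mul_fourierGaussian {C : ℝ} (hh : AEStronglyMeasurable h)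
    (hh_nonneg : ∀ ξ, 0 ≤ h ξ) (hh_le : ∀ ξ, h ξ ≤ C)
    (hint : IntegrableOn (fun u => u⁻¹ * ∫ ξ, h ξ * fourierGaussian u ξ) (Ioi 0)) :
    Integrable (fun q : V × ℝ => h q.1 * (q.2⁻¹ * fourierGaussian q.2 q.1))
      (volume.prod (volume.restrict (Ioi 0))) := by
  have hmeas : Measurable fun q : V × ℝ => q.2⁻¹ * fourierGaussian q.2 q.1 := by
    unfold fourierGaussian
    fun_prop
  refine (integrable_prod_iff' (hh.comp_fst.mul hmeas.aestronglyMeasurable)).2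
    ⟨ae_restrict_of_forall_mem measurableSet_Ioi fun u hu => ?_,
      hint.congr (ae_restrict_of_forall_mem measurableSet_Ioi fun u hu => ?_)⟩
  · exact ((integrable_fourierGaussian hu).const_mul u⁻¹).bdd_mul hh
      (.of_forall fun ξ => (norm_of_nonneg (hh_nonneg ξ)).trans_le (hh_le ξ))
  · have hu : 0 < u := hu
    simp only
    rw [← integral_const_mul]
    congr with ξ
    have := fourierGaussian_nonneg hu.le ξ
    have := hh_nonneg ξ
    rw [Pi.mul_apply, norm_of_nonneg (by positivity)]
    ring

variable [Nontrivial V]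

lemma integrable_div_norm_pow_finrank
    (hint : Integrable (fun q : V × ℝ => h q.1 * (q.2⁻¹ * fourierGaussian q.2 q.1))
      (volume.prod (volume.restrict (Ioi 0)))) :
    Integrable (fun ξ => h ξ / ‖ξ‖ ^ finrank ℝ V) := by
  have hc : Gamma (finrank ℝ V / 2) / π ^ (finrank ℝ V / 2 : ℝ) ≠ 0 := by
    have : 0 < finrank ℝ V := finrank_pos
    have := Gamma_pos_of_pos (show (0 : ℝ) < finrank ℝ V / 2 by positivity)
    positivity
  refine (integrable_const_mul_iff hc.isUnit _).1 (hint.integral_prod_left.congr ?_)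
  filter_upwards [Measure.ae_ne volume 0] with ξ hξ
  rw [integral_const_mul, integral_inv_mul_fourierGaussian hξ]
  ring

lemma integral_inv_mul_integral_mul_fourierGaussian
    (hint : Integrable (fun q : V × ℝ => h q.1 * (q.2⁻¹ * fourierGaussian q.2 q.1))
      (volume.prod (volume.restrict (Ioi 0)))) :
    ∫ u in Ioi (0 : ℝ), u⁻¹ * ∫ ξ, h ξ * fourierGaussian u ξ =
      Gamma (finrank ℝ V / 2) / π ^ (finrank ℝ V / 2 : ℝ) * ∫ ξ, h ξ / ‖ξ‖ ^ finrank ℝ V :=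
  calc ∫ u in Ioi (0 : ℝ), u⁻¹ * ∫ ξ, h ξ * fourierGaussian u ξ
      = ∫ u in Ioi (0 : ℝ), ∫ ξ, h ξ * (u⁻¹ * fourierGaussian u ξ) := by
        simp only [← integral_const_mul, mul_left_comm]
    _ = ∫ ξ, ∫ u in Ioi (0 : ℝ), h ξ * (u⁻¹ * fourierGaussian u ξ) :=
        (integral_integral_swap hint).symm
    _ = ∫ ξ, Gamma (finrank ℝ V / 2) / π ^ (finrank ℝ V / 2 : ℝ) *
          (h ξ / ‖ξ‖ ^ finrank ℝ V) := by
        refine integral_congr_ae ?_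
        filter_upwards [Measure.ae_ne volume 0] with ξ hξ
        rw [integral_const_mul, integral_inv_mul_fourierGaussian hξ]
        ring
    _ = _ := integral_const_mul _ _

end Dilation

section LogKernel

lemma abs_log_norm_le {V : Type*} [SeminormedAddCommGroup V] (x : V) :
    |log ‖x‖| ≤ (Metric.ball 0 1).indicator (fun y : V => |log ‖y‖|) x + ‖x‖ := by
  by_cases hx : x ∈ Metric.ball (0 : V) 1
  · simp [indicator_of_mem hx]
  · have hx_norm : 1 ≤ ‖x‖ := by simpa using hx
    rw [indicator_of_notMem hx, zero_add, abs_of_nonneg (log_nonneg hx_norm)]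
    linarith [log_le_sub_one_of_pos (one_pos.trans_le hx_norm)]

variable {V : Type*} [NormedAddCommGroup V] [NormedSpace ℝ V] [FiniteDimensional ℝ V]
  [Nontrivial V] [MeasurableSpace V] [BorelSpace V] (μ : Measure V) [μ.IsAddHaarMeasure]

lemma integrableOn_log_norm_ball (R : ℝ) :
    IntegrableOn (fun x : V => log ‖x‖) (Metric.ball 0 R) μ := by
  have hlog : IntervalIntegrable (fun y => y ^ (finrank ℝ V - 1) • log y) volume 0 R :=
    intervalIntegral.intervalIntegrable_log'.continuousOn_smul (continuous_pow _).continuousOn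
  exact (integrableOn_fun_norm_addHaar μ).2 (hlog.1.mono_set Ioo_subset_Ioc_self)

variable {A : Type*} [NormedRing A] [NormedAlgebra ℝ A] {μ}

theorem integrable_log_norm_sub_smul_mul {f g : V → A} {C : ℝ} (hf : Integrable f μ)
    (hf_le : ∀ x, ‖f x‖ ≤ C) (hf_moment : Integrable (fun x => ‖x‖ * ‖f x‖) μ)
    (hg : Integrable g μ) (hg_moment : Integrable (fun x => ‖x‖ * ‖g x‖) μ) :
    Integrable (fun p : V × V => log ‖p.1 - p.2‖ • (f p.1 * g p.2)) (μ.prod μ) := by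
  let L : V → ℝ := (Metric.ball 0 1).indicator fun x => |log ‖x‖|
  have hL : Integrable L μ :=
    (integrable_indicator_iff measurableSet_ball).2 (integrableOn_log_norm_ball μ 1).abs
  have hL_nonneg : ∀ x, 0 ≤ L x := indicator_nonneg fun _ _ => abs_nonneg _
  have h_near := (Integrable.convolution_integrand (.mul ℝ ℝ) hg.norm hL).const_mul C
  have h_far := (hf_moment.mul_prod hg.norm).add (hf.norm.mul_prod hg_moment)
  have hlog_meas : Measurable fun p : V × V => log ‖p.1 - p.2‖ := by fun_prop
  refine (h_near.add h_far).mono'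
    (hlog_meas.aestronglyMeasurable.smul (hf.1.comp_fst.mul hg.1.comp_snd)) (.of_forall fun p => ?_)
  calc ‖log ‖p.1 - p.2‖ • (f p.1 * g p.2)‖
      ≤ (L (p.1 - p.2) + (‖p.1‖ + ‖p.2‖)) * (‖f p.1‖ * ‖g p.2‖) := by
        rw [norm_smul, norm_eq_abs]
        gcongr
        · exact add_nonneg (hL_nonneg _) (by positivity)
        · exact (abs_log_norm_le _).trans (add_le_add_right (norm_sub_le _ _) _)
        · exact norm_mul_le _ _
    _ = ‖f p.1‖ * (‖g p.2‖ * L (p.1 - p.2)) +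
          (‖p.1‖ * ‖f p.1‖ * ‖g p.2‖ + ‖f p.1‖ * (‖p.2‖ * ‖g p.2‖)) := by ring
    _ ≤ C * (‖g p.2‖ * L (p.1 - p.2)) +
          (‖p.1‖ * ‖f p.1‖ * ‖g p.2‖ + ‖f p.1‖ * (‖p.2‖ * ‖g p.2‖)) := by
        gcongr
        · exact mul_nonneg (norm_nonneg _) (hL_nonneg _)
        · exact hf_le _

lemma integrable_log_norm_sub_smul_schwartz_mul (φ ψ : 𝓢(V, A)) :
    Integrable (fun p : V × V => log ‖p.1 - p.2‖ • (φ p.1 * ψ p.2)) (μ.prod μ) :=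
  integrable_log_norm_sub_smul_mul φ.integrable (φ.norm_le_seminorm ℝ)
    (by simpa using φ.integrable_pow_mul μ 1) ψ.integrable (by simpa using ψ.integrable_pow_mul μ 1)

end LogKernel

section LogEnergy

variable {V : Type*} [NormedAddCommGroup V] [InnerProductSpace ℝ V] [FiniteDimensional ℝ V]
  [MeasurableSpace V] [BorelSpace V] {f : V → ℂ}

lemma integrable_prod_mul_conj (hf : Integrable f) :
    Integrable fun p : V × V => f p.1 * conj (f p.2) :=
  hf.mul_prod (Complex.conjLIE.integrable_comp_iff.2 hf)

lemma integral_prod_mul_conj_eq_zero (hf_zero : ∫ x, f x = 0) :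
    ∫ p : V × V, f p.1 * conj (f p.2) = 0 := by
  rw [Measure.volume_eq_prod, integral_prod_mul f fun x => conj (f x), hf_zero, zero_mul]

lemma ae_norm_sub_sq_pos [Nontrivial V] : ∀ᵐ p : V × V, 0 < ‖p.1 - p.2‖ ^ 2 := by
  have h : ∀ᵐ p : V × V, p.1 - p.2 ≠ 0 :=
    (quasiMeasurePreserving_sub_of_right_invariant volume volume).ae (Measure.ae_ne volume 0)
  exact h.mono fun p hp => pow_pos (norm_pos_iff.2 hp) 2

variable [Nontrivial V] (hf : Integrable f) (hf_zero : ∫ x, f x = 0)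
  (hlog : Integrable fun p : V × V => log (‖p.1 - p.2‖ ^ 2) • (f p.1 * conj (f p.2)))
include hf hf_zero hlog

lemma integrableOn_inv_mul_integral_fourier_sq_mul_fourierGaussian :
    IntegrableOn (fun u => u⁻¹ * ∫ ξ, ‖𝓕 f ξ‖ ^ 2 * fourierGaussian u ξ) (Ioi 0) := by
  have h := integrableOn_inv_smul_integral_exp_neg_smul (by fun_prop) ae_norm_sub_sq_pos
    (integrable_prod_mul_conj hf) (integral_prod_mul_conj_eq_zero hf_zero) hlog
  refine h.re.congr (ae_restrict_of_forall_mem measurableSet_Ioi fun u hu => ?_)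
  simp only
  rw [integral_exp_neg_smul_mul_conj hf hu, RCLike.smul_re, RCLike.re_to_complex,
    Complex.ofReal_re]

theorem integral_log_norm_sub_sq_smul_mul_conj :
    ∫ p : V × V, log (‖p.1 - p.2‖ ^ 2) • (f p.1 * conj (f p.2)) =
      (-∫ u in Ioi (0 : ℝ), u⁻¹ * ∫ ξ, ‖𝓕 f ξ‖ ^ 2 * fourierGaussian u ξ : ℝ) := by
  rw [integral_log_smul_of_integral_eq_zero (by fun_prop) ae_norm_sub_sq_pos
    (integrable_prod_mul_conj hf) (integral_prod_mul_conj_eq_zero hf_zero) hlog,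
    Complex.ofReal_neg, ← integral_complex_ofReal]
  congr 1
  refine setIntegral_congr_fun measurableSet_Ioi fun u hu => ?_
  rw [integral_exp_neg_smul_mul_conj hf hu, Complex.real_smul, Complex.ofReal_mul]

end LogEnergy

theorem parseval_log_kernel_mean_zero_general {V : Type*} [NormedAddCommGroup V]
    [InnerProductSpace ℝ V] [FiniteDimensional ℝ V] [Nontrivial V] [MeasurableSpace V]
    [BorelSpace V] {f : V → ℂ} (hf : Integrable f) (hf_zero : ∫ x, f x = 0)
    (hlog : Integrable fun p : V × V => log ‖p.1 - p.2‖ • (f p.1 * conj (f p.2))) :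
    Integrable (fun ξ => ‖𝓕 f ξ‖ ^ 2 / ‖ξ‖ ^ finrank ℝ V) ∧
      ∫ t, ∫ s, log (1 / ‖t - s‖) • (f t * conj (f s)) =
        (Gamma (finrank ℝ V / 2) / (2 * π ^ (finrank ℝ V / 2 : ℝ)) *
          ∫ ξ, ‖𝓕 f ξ‖ ^ 2 / ‖ξ‖ ^ finrank ℝ V : ℝ) := by
  have hlog_sq : ∀ x : V, log (‖x‖ ^ 2) = 2 * log ‖x‖ := fun x => by simp [log_pow]
  have h_log_sq : Integrable fun p : V × V => log (‖p.1 - p.2‖ ^ 2) • (f p.1 * conj (f p.2)) := by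
    simpa only [hlog_sq, mul_smul] using hlog.fun_smul (2 : ℝ)
  have h_int := integrable_mul_inv_mul_fourierGaussian
    (h := fun ξ => ‖𝓕 f ξ‖ ^ 2)
    ((continuous_fourier_of_integrable hf).norm.pow 2).aestronglyMeasurable (fun _ => sq_nonneg _)
    (fun ξ => pow_le_pow_left₀ (norm_nonneg _) (norm_fourier_le_integral_norm f ξ) 2)
    (integrableOn_inv_mul_integral_fourier_sq_mul_fourierGaussian hf hf_zero h_log_sq)
  refine ⟨integrable_div_norm_pow_finrank h_int, ?_⟩
  have h_iter : ∫ t, ∫ s, log (1 / ‖t - s‖) • (f t * conj (f s)) =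
      ((-1 / 2 : ℝ) : ℂ) * ∫ p : V × V, log (‖p.1 - p.2‖ ^ 2) • (f p.1 * conj (f p.2)) := by
    rw [Measure.volume_eq_prod, integral_prod _ h_log_sq]
    simp only [hlog_sq, one_div, log_inv, mul_smul, integral_smul, neg_smul, integral_neg]
    push_cast [Complex.real_smul]
    ring
  rw [h_iter, integral_log_norm_sub_sq_smul_mul_conj hf hf_zero h_log_sq,
    integral_inv_mul_integral_mul_fourierGaussian h_int, ← Complex.ofReal_mul]
  congr 1
  field_simp

lemma fourierHat_eq_fourier (f : ℝ → ℝ) : fourierHat f = 𝓕 fun x => (f x : ℂ) := by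
  ext ξ
  simp only [fourierHat, fourier_real_eq_integral_exp_smul, smul_eq_mul]
  congr with x
  push_cast
  ring_nf

theorem parseval_log_kernel_mean_zero (φ : SchwartzMap ℝ ℝ)
    (hφ : ∫ x : ℝ, φ x = 0) :
    (∫ t : ℝ, ∫ s : ℝ, φ t * φ s * Real.log (1 / |t - s|) =
      (1 / 2) * ∫ ξ : ℝ, ‖fourierHat (fun x => φ x) ξ‖ ^ 2 / |ξ|) ∧
    0 ≤ ∫ t : ℝ, ∫ s : ℝ, φ t * φ s * Real.log (1 / |t - s|) := by
  have hlog := (integrable_log_norm_sub_smul_schwartz_mul (μ := volume) φ φ).ofReal (𝕜 := ℂ)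
  have h := (parseval_log_kernel_mean_zero_general (f := fun x => (φ x : ℂ)) φ.integrable.ofReal
    (by rw [integral_complex_ofReal, hφ, Complex.ofReal_zero])
    (by simpa [Measure.volume_eq_prod] using hlog)).2
  have h_eq : ∫ t : ℝ, ∫ s : ℝ, φ t * φ s * Real.log (1 / |t - s|) =
      (1 / 2) * ∫ ξ : ℝ, ‖fourierHat (fun x => φ x) ξ‖ ^ 2 / |ξ| := by
    rw [fourierHat_eq_fourier]
    simp only [Complex.conj_ofReal, Complex.real_smul, ← Complex.ofReal_mul,
      integral_complex_ofReal, Complex.ofReal_inj, finrank_self, Nat.cast_one, pow_one,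
      norm_eq_abs, Gamma_one_half_eq, ← sqrt_eq_rpow] at h
    rw [show √π / (2 * √π) = 1 / 2 by field_simp] at h
    rw [← h]
    simp [mul_comm]
  refine ⟨h_eq, h_eq ▸ ?_⟩
  positivity
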